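/- arXiv:1209.4632 — 2 statements merged into one kernel-verified Lean document; each statement's English description precedes it below -/
import Mathlib

section
/- Fix k ∈ ℕ. Then limsup_{m→∞} D_{ℝ,m}(2^k)^{1/m} ≥ 2^{1−2^{−k}}. -/
open MvPolynomial Filter

/-- The sup norm of a real polynomial in `n` variables over the cube `[-1,1]^n`. -/
noncomputable def supNorm {n : ℕ} (P : MvPolynomial (Fin n) ℝ) : ℝ :=
  sSup {y : ℝ | ∃ x : Fin n → ℝ, (∀ i, |x i| ≤ 1) ∧ y = |eval x P|}

/-- The `ℓ_p` norm of the coefficients of a real polynomial. -/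
noncomputable def lpNorm {n : ℕ} (p : ℝ) (P : MvPolynomial (Fin n) ℝ) : ℝ :=
  (∑ α ∈ P.support, |coeff α P| ^ p) ^ (1 / p)

/-- The real polynomial Bohnenblust–Hille constant `D_{ℝ,m}`. -/
noncomputable def BHconst (m : ℕ) : ℝ :=
  sInf {D : ℝ | 0 < D ∧ ∀ (n : ℕ) (P : MvPolynomial (Fin n) ℝ),
    P.IsHomogeneous m → lpNorm (2 * m / (m + 1)) P ≤ D * supNorm P}

/-- The real polynomial Bohnenblust–Hille constant `D_{ℝ,m}(n)` in a fixed number `n`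
of variables. -/
noncomputable def BHconstN (m n : ℕ) : ℝ :=
  sInf {D : ℝ | 0 < D ∧ ∀ P : MvPolynomial (Fin n) ℝ,
    P.IsHomogeneous m → lpNorm (2 * m / (m + 1)) P ≤ D * supNorm P}


theorem exQ (k : ℕ) : ∀ n : ℕ, n = 2 ^ k → ∃ Q : MvPolynomial (Fin n) ℝ, Q.IsHomogeneous (2 ^ k) ∧
    (∀ x : Fin n → ℝ, (∀ i, |x i| ≤ 1) → |eval x Q| ≤ 1) ∧
    ∀ w : ℂ, ‖w‖ = 1 → ∃ z : Fin n → ℂ, (∀ i, ‖z i‖ = 1) ∧ aeval z Q = w * 2 ^ (2 ^ k - 1) := by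
  induction k with
  | zero =>
    rintro n rfl
    refine ⟨X 0, ?_, ?_, ?_⟩
    · simpa using isHomogeneous_X ℝ (0 : Fin (2 ^ 0))
    · intro x hx; simpa using hx 0
    · intro w hw
      exact ⟨fun _ => w, fun _ => hw, by simp⟩
  | succ k ih =>
    intro n hn
    obtain ⟨Q, hQ, hb, hz⟩ := ih _ rfl
    have : n = 2 ^ k + 2 ^ k := by rw [hn]; ring
    subst this
    refine ⟨rename (Fin.castAdd (2 ^ k)) Q ^ 2 - rename (Fin.natAdd (2 ^ k)) Q ^ 2, ?_, ?_, ?_⟩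
    · have e : 2 ^ (k + 1) = 2 ^ k * 2 := by ring
      rw [e]
      exact (hQ.rename_isHomogeneous.pow 2).sub (hQ.rename_isHomogeneous.pow 2)
    · intro x hx
      simp only [map_sub, map_pow, eval_rename]
      have h1 := hb (x ∘ Fin.castAdd (2 ^ k)) (fun i => hx _)
      have h2 := hb (x ∘ Fin.natAdd (2 ^ k)) (fun i => hx _)
      rw [← sq_le_one_iff_abs_le_one] at h1 h2
      rw [abs_le]
      constructor <;> nlinarith [sq_nonneg (eval (x ∘ Fin.castAdd (2 ^ k)) Q),
        sq_nonneg (eval (x ∘ Fin.natAdd (2 ^ k)) Q)]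
    · intro w hw
      obtain ⟨w1, h1⟩ := IsAlgClosed.exists_pow_nat_eq w two_pos
      obtain ⟨w2, h2⟩ := IsAlgClosed.exists_pow_nat_eq (-w) two_pos
      replace h1 := h1.symm
      replace h2 := h2.symm
      have n1 : ‖w1‖ = 1 := by
        rw [h1, norm_pow] at hw
        exact (pow_eq_one_iff_of_nonneg (norm_nonneg _) two_ne_zero).1 hw
      have n2 : ‖w2‖ = 1 := by
        rw [← norm_neg, h2, norm_pow] at hw
        exact (pow_eq_one_iff_of_nonneg (norm_nonneg _) two_ne_zero).1 hw
      obtain ⟨z1, hz1, e1⟩ := hz w1 n1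
      obtain ⟨z2, hz2, e2⟩ := hz w2 n2
      refine ⟨Fin.append z1 z2, ?_, ?_⟩
      · intro i
        refine Fin.addCases (fun i => ?_) (fun i => ?_) i
        · simpa using hz1 i
        · rw [Fin.append_right]; exact hz2 i
      · have c1 : Fin.append z1 z2 ∘ Fin.castAdd (2 ^ k) = z1 := by ext i; simp
        have c2 : Fin.append z1 z2 ∘ Fin.natAdd (2 ^ k) = z2 := by ext i; exact Fin.append_right _ _ _
        simp only [map_sub, map_pow, aeval_rename, c1, c2, e1, e2, mul_pow, ← h1, ← h2]
        have : 2 ^ (k + 1) - 1 = (2 ^ k - 1) * 2 + 1 := by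
          have := Nat.one_le_two_pow (n := k)
          rw [pow_succ]; omega
        rw [this]
        ring

theorem supp_card {n m : ℕ} (P : MvPolynomial (Fin n) ℝ) (hP : P.IsHomogeneous m) :
    P.support.card ≤ (m + 1) ^ n := by
  have : P.support.card ≤ Fintype.card (Fin n → Fin (m + 1)) := by
    rw [← Finset.card_univ]
    refine Finset.card_le_card_of_injOn
      (fun α i => (⟨min (α i) m, by omega⟩ : Fin (m + 1))) (by simp) ?_
    intro α hα β hβ h
    have key : ∀ γ ∈ P.support, ∀ i, γ i ≤ m := by
      intro γ hγ i
      have h1 := hP (mem_support_iff.1 hγ)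
      rw [← h1]
      rw [Finsupp.weight_apply, Finsupp.sum_fintype _ _ (by simp)]
      simp only [Pi.one_apply, smul_eq_mul, mul_one]
      exact Finset.single_le_sum (f := fun i => γ i) (fun _ _ => Nat.zero_le _) (Finset.mem_univ i)
    ext i
    have h2 := congrFun h i
    simp only [Fin.mk.injEq] at h2
    have := key α hα i
    have := key β hβ i
    omega
  simpa using this

theorem coeff_le_lp {n : ℕ} {p : ℝ} (hp : 0 < p) (P : MvPolynomial (Fin n) ℝ) (α : Fin n →₀ ℕ) (hα : α ∈ P.support) :
    |coeff α P| ≤ lpNorm p P := by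
  unfold lpNorm
  calc |coeff α P| = (|coeff α P| ^ p) ^ (1 / p) := by
        rw [← Real.rpow_mul (abs_nonneg _), mul_one_div_cancel hp.ne', Real.rpow_one]
    _ ≤ _ := by
        apply Real.rpow_le_rpow (by positivity) _ (by positivity)
        exact Finset.single_le_sum (f := fun α => |coeff α P| ^ p) (fun _ _ => by positivity) hα

theorem aeval_le_lp {n m : ℕ} {p : ℝ} (hp : 0 < p) (P : MvPolynomial (Fin n) ℝ) (hP : P.IsHomogeneous m)
    (z : Fin n → ℂ) (hz : ∀ i, ‖z i‖ = 1) :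
    ‖aeval z P‖ ≤ ((m : ℝ) + 1) ^ n * lpNorm p P := by
  have h0 : 0 ≤ lpNorm p P := by unfold lpNorm; positivity
  calc ‖aeval z P‖ ≤ ∑ α ∈ P.support, |coeff α P| := by
        rw [aeval_def, eval₂_eq']
        refine (norm_sum_le _ _).trans (Finset.sum_le_sum fun α _ => ?_)
        simp [hz]
    _ ≤ ∑ α ∈ P.support, lpNorm p P := Finset.sum_le_sum fun α hα => coeff_le_lp hp P α hα
    _ = P.support.card * lpNorm p P := by simp
    _ ≤ _ := by
        gcongr
        exact_mod_cast supp_card P hP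

theorem T_coeff (m : ℕ) : (∀ j, |(Polynomial.Chebyshev.T ℝ m).coeff j| ≤ 3 ^ m) ∧
    (∀ j, |(Polynomial.Chebyshev.T ℝ (m + 1 : ℕ)).coeff j| ≤ 3 ^ (m + 1)) := by
  induction m with
  | zero =>
    constructor
    · intro j; rw [Nat.cast_zero, Polynomial.Chebyshev.T_zero, Polynomial.coeff_one]; split_ifs <;> simp
    · intro j; rw [Nat.zero_add, Nat.cast_one, Polynomial.Chebyshev.T_one, Polynomial.coeff_X]; split_ifs <;> simp
  | succ m ih =>
    refine ⟨ih.2, fun j => ?_⟩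
    have := Polynomial.Chebyshev.T_add_two ℝ (m : ℤ)
    push_cast at *
    rw [show (m : ℤ) + 1 + 1 = m + 2 by ring, this]
    have h1 := ih.1 j
    have h3 : (3 : ℝ) ^ (m + 1 + 1) = 9 * 3 ^ m := by ring
    rw [h3, mul_assoc, Polynomial.coeff_sub]
    have e2 : (2 : Polynomial ℝ) = Polynomial.C 2 := (map_ofNat Polynomial.C 2).symm
    rw [e2, Polynomial.coeff_C_mul]
    have h4 : |(Polynomial.X * Polynomial.Chebyshev.T ℝ (m + 1)).coeff j| ≤ 3 * 3 ^ m := by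
      cases j with
      | zero => simp
      | succ j => rw [Polynomial.coeff_X_mul]; have := ih.2 j; rw [pow_succ'] at this; exact this
    rw [abs_le] at *
    have : (0 : ℝ) < 3 ^ m := by positivity
    constructor <;> linarith

theorem dC (c : ℝ) (q : Polynomial ℝ) : (Polynomial.C c * q).degree ≤ q.degree := by
  rw [← Polynomial.smul_eq_C_mul]; exact Polynomial.degree_smul_le c q

theorem uni (m : ℕ) : ∀ M : ℝ, 0 < M → ∀ p : Polynomial ℝ, p.degree ≤ m →
    (∀ x : ℝ, |x| ≤ 1 → |p.eval x| ≤ M) → ∀ j, |p.coeff j| ≤ 3 ^ (m + 1) * M := by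
  induction m with
  | zero =>
    intro M hM p hp hb j
    have := Polynomial.eq_C_of_degree_le_zero (by simpa using hp)
    rw [this] at hb ⊢
    have h1 := hb 0 (by simp)
    rw [Polynomial.eval_C] at h1
    rw [Polynomial.coeff_C]
    split_ifs
    · rw [zero_add, pow_one]; linarith
    · simp; positivity
  | succ m ih =>
    intro M hM p hp hb j
    have key : ∀ q : Polynomial ℝ, q.degree ≤ (m + 1 : ℕ) → (∀ x : ℝ, |x| ≤ 1 → |q.eval x| ≤ M) →
        q.coeff (m + 1) ≤ 2 ^ m * M := by
      intro q hq hqb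
      have := Polynomial.Chebyshev.coeff_le_of_forall_abs_le_one (n := m + 1) (P := Polynomial.C M⁻¹ * q)
        ((dC _ _).trans hq) (by
          intro x hx
          rw [Polynomial.eval_mul, Polynomial.eval_C, abs_mul, abs_of_pos (inv_pos.2 hM)]
          rw [inv_mul_le_one₀ hM]
          exact hqb x (abs_le.2 hx))
      rw [Polynomial.coeff_C_mul, inv_mul_le_iff₀ hM] at this
      simpa [mul_comm] using this
    set a := p.coeff (m + 1) with ha
    have habs : |a| ≤ 2 ^ m * M := by
      rw [abs_le]
      refine ⟨?_, key p hp hb⟩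
      have := key (-p) (by simpa using hp) (by intro x hx; simpa using hb x hx)
      rw [Polynomial.coeff_neg] at this
      linarith
    set c := a / 2 ^ m with hc
    have hcabs : |c| ≤ M := by
      rw [hc, abs_div, abs_of_pos (show (0 : ℝ) < 2 ^ m by positivity), div_le_iff₀ (by positivity)]
      linarith
    set t := Polynomial.Chebyshev.T ℝ ((m + 1 : ℕ) : ℤ) with ht
    have htd : t.degree = (m + 1 : ℕ) := by rw [ht, Polynomial.Chebyshev.degree_T, Int.natAbs_natCast]
    have htc : t.coeff (m + 1) = 2 ^ m := by
      have h1 : t.leadingCoeff = 2 ^ m := by rw [ht, Polynomial.Chebyshev.leadingCoeff_T, Int.natAbs_natCast, Nat.add_sub_cancel]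
      rw [← h1, Polynomial.leadingCoeff, Polynomial.natDegree_eq_of_degree_eq_some htd]
    have hr : (p - Polynomial.C c * t).degree ≤ m := by
      have h1 : (p - Polynomial.C c * t).degree ≤ (m + 1 : ℕ) :=
        (Polynomial.degree_sub_le _ _).trans (max_le hp ((dC _ _).trans htd.le))
      rw [Polynomial.degree_le_iff_coeff_zero] at h1 ⊢
      intro i hi
      have hi' : m < i := by exact_mod_cast hi
      rcases eq_or_lt_of_le (Nat.succ_le_of_lt hi') with h | h
      · rw [← h, Polynomial.coeff_sub, Polynomial.coeff_C_mul]
        show p.coeff (m + 1) - c * t.coeff (m + 1) = 0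
        rw [htc, hc, ← ha]; field_simp; ring
      · exact h1 i (by exact_mod_cast h)
    have := ih (2 * M) (by linarith) (p - Polynomial.C c * t) hr (by
      intro x hx
      rw [Polynomial.eval_sub, Polynomial.eval_mul, Polynomial.eval_C]
      have h1 := hb x hx
      have h2 : |t.eval x| ≤ 1 := Polynomial.Chebyshev.abs_eval_T_real_le_one _ hx
      have h3 : |c * t.eval x| ≤ M * 1 := by
        rw [abs_mul]; gcongr
      exact (abs_sub _ _).trans (by linarith)) j
    rw [Polynomial.coeff_sub, Polynomial.coeff_C_mul] at this
    have h4 : |c * t.coeff j| ≤ M * 3 ^ (m + 1) := by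
      rw [abs_mul]; gcongr; exact (T_coeff m).2 j
    have h5 : (3 : ℝ) ^ (m + 1 + 1) * M = 3 ^ (m + 1) * (2 * M) + M * 3 ^ (m + 1) := by ring
    rw [h5]
    calc |p.coeff j| = |(p.coeff j - c * t.coeff j) + c * t.coeff j| := by ring_nf
      _ ≤ _ := (abs_add_le _ _).trans (by linarith)

theorem multi (m n : ℕ) : ∀ M : ℝ, 0 < M → ∀ P : MvPolynomial (Fin n) ℝ, (∀ i, P.degreeOf i ≤ m) →
    (∀ x : Fin n → ℝ, (∀ i, |x i| ≤ 1) → |eval x P| ≤ M) →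
    ∀ α, |coeff α P| ≤ (3 ^ (m + 1)) ^ n * M := by
  induction n with
  | zero =>
    intro M hM P hP hb α
    have h := hb 0 (fun i => i.elim0)
    rw [eq_C_of_isEmpty P] at h
    rw [eval_C] at h
    rw [Subsingleton.elim α 0]
    simpa using h
  | succ n ih =>
    intro M hM P hP hb α
    rw [← Finsupp.cons_tail α, ← finSuccEquiv_coeff_coeff, pow_succ, mul_assoc]
    refine ih _ (by positivity) _ (fun i => ?_) ?_ _
    · exact (degreeOf_coeff_finSuccEquiv P i _).trans (hP _)
    · intro x hx
      have := uni m M hM (Polynomial.map (eval x) (finSuccEquiv ℝ n P)) ?_ ?_ (α 0)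
      · simpa [Polynomial.coeff_map] using this
      · refine Polynomial.degree_map_le.trans (Polynomial.degree_le_of_natDegree_le ?_)
        rw [natDegree_finSuccEquiv]
        exact hP 0
      · intro y hy
        have h2 := hb (Fin.cons y x) (by
          intro i; refine Fin.cases ?_ (fun i => ?_) i
          · simpa using hy
          · simpa using hx i)
        rwa [eval_eq_eval_mv_eval'] at h2

theorem bdd {n : ℕ} (P : MvPolynomial (Fin n) ℝ) :
    BddAbove {y : ℝ | ∃ x : Fin n → ℝ, (∀ i, |x i| ≤ 1) ∧ y = |eval x P|} := by
  refine ⟨∑ α ∈ P.support, |coeff α P|, ?_⟩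
  rintro y ⟨x, hx, rfl⟩
  rw [eval_eq']
  refine (Finset.abs_sum_le_sum_abs _ _).trans (Finset.sum_le_sum fun α _ => ?_)
  rw [abs_mul, Finset.abs_prod]
  refine mul_le_of_le_one_right (abs_nonneg _) (Finset.prod_le_one (fun _ _ => abs_nonneg _) ?_)
  intro i _
  rw [abs_pow]
  exact pow_le_one₀ (abs_nonneg _) (hx i)

theorem supNorm_nonneg {n : ℕ} (P : MvPolynomial (Fin n) ℝ) : 0 ≤ supNorm P := by
  apply Real.sSup_nonneg
  rintro y ⟨x, -, rfl⟩
  exact abs_nonneg _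

theorem supNorm_le_one {n : ℕ} (P : MvPolynomial (Fin n) ℝ)
    (h : ∀ x : Fin n → ℝ, (∀ i, |x i| ≤ 1) → |eval x P| ≤ 1) : supNorm P ≤ 1 := by
  apply Real.sSup_le _ zero_le_one
  rintro y ⟨x, hx, rfl⟩
  exact h x hx

theorem upper {m n : ℕ} (hm : 1 ≤ m) (P : MvPolynomial (Fin n) ℝ) (hP : P.IsHomogeneous m) :
    lpNorm (2 * m / (m + 1)) P ≤ (((m : ℝ) + 1) ^ n * (3 ^ (m + 1)) ^ n) * supNorm P := by
  have hcoeff : ∀ α, |coeff α P| ≤ (3 ^ (m + 1)) ^ n * supNorm P := by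
    intro α
    have key : ∀ ε : ℝ, 0 < ε → |coeff α P| ≤ (3 ^ (m + 1)) ^ n * (supNorm P + ε) := by
      intro ε hε
      refine multi m n _ (by have := supNorm_nonneg P; linarith) P (fun i => ?_) (fun x hx => ?_) α
      · exact (degreeOf_le_totalDegree P i).trans hP.totalDegree_le
      · have : |eval x P| ≤ supNorm P := le_csSup (bdd P) ⟨x, hx, rfl⟩
        linarith
    refine le_of_forall_pos_le_add fun ε hε => ?_
    have hc : (0 : ℝ) < (3 ^ (m + 1)) ^ n := by positivity
    have := key (ε / (3 ^ (m + 1)) ^ n) (by positivity)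
    rwa [mul_add, mul_div_cancel₀ _ hc.ne'] at this
  set B := (3 ^ (m + 1)) ^ n * supNorm P with hB
  have hB0 : 0 ≤ B := mul_nonneg (by positivity) (supNorm_nonneg P)
  set p : ℝ := 2 * m / (m + 1) with hp
  have hm' : (1 : ℝ) ≤ m := by exact_mod_cast hm
  have hp1 : 1 ≤ p := by rw [hp, le_div_iff₀ (by positivity)]; linarith
  set N : ℝ := ((m : ℝ) + 1) ^ n with hN
  have hN1 : 1 ≤ N := one_le_pow₀ (by linarith)
  rw [mul_assoc, ← hB]
  calc lpNorm p P ≤ ((N * B) ^ p) ^ (1 / p) := by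
        unfold lpNorm
        apply Real.rpow_le_rpow (by positivity) _ (by positivity)
        calc ∑ α ∈ P.support, |coeff α P| ^ p ≤ ∑ α ∈ P.support, B ^ p :=
              Finset.sum_le_sum fun α _ => Real.rpow_le_rpow (abs_nonneg _) (hcoeff α) (by linarith)
          _ = P.support.card * B ^ p := by simp
          _ ≤ N * B ^ p := by
              gcongr
              rw [hN]
              exact_mod_cast supp_card P hP
          _ ≤ N ^ p * B ^ p := by
              gcongr
              exact Real.self_le_rpow_of_one_le hN1 hp1
          _ = (N * B) ^ p := (Real.mul_rpow (by linarith) hB0).symm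
    _ = N * B := by
        rw [← Real.rpow_mul (by positivity), mul_one_div_cancel (by linarith), Real.rpow_one]

theorem BH_nonneg (m n : ℕ) : 0 ≤ BHconstN m n := Real.sInf_nonneg fun _ h => h.1.le

theorem BH_upper (m n : ℕ) (hm : 1 ≤ m) : BHconstN m n ^ ((m : ℝ)⁻¹) ≤ 18 ^ n := by
  have h : BHconstN m n ≤ ((m : ℝ) + 1) ^ n * (3 ^ (m + 1)) ^ n :=
    csInf_le ⟨0, fun _ h => h.1.le⟩ ⟨by positivity, fun P hP => upper hm P hP⟩
  have h2 : BHconstN m n ≤ (18 ^ n : ℝ) ^ m := by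
    refine h.trans ?_
    rw [← mul_pow, ← pow_mul, mul_comm n m, pow_mul]
    gcongr
    have a1 : (m : ℝ) + 1 ≤ 2 ^ m := by exact_mod_cast Nat.lt_two_pow_self
    have a2 : (3 : ℝ) ^ (m + 1) ≤ 9 ^ m := by
      rw [show (9 : ℝ) = 3 ^ 2 by norm_num, ← pow_mul]
      exact pow_le_pow_right₀ (by norm_num) (by omega)
    calc ((m : ℝ) + 1) * 3 ^ (m + 1) ≤ 2 ^ m * 9 ^ m := by gcongr
      _ = 18 ^ m := by rw [← mul_pow]; norm_num
  calc _ ≤ ((18 ^ n : ℝ) ^ m) ^ ((m : ℝ)⁻¹) :=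
        Real.rpow_le_rpow (BH_nonneg m n) h2 (by positivity)
    _ = _ := Real.pow_rpow_inv_natCast (by positivity) (by omega)

theorem BH_lower (k N : ℕ) (hN : 1 ≤ N) :
    (2 : ℝ) ^ ((2 ^ k - 1) * N) / (((2 ^ k * N : ℕ) : ℝ) + 1) ^ (2 ^ k) ≤ BHconstN (2 ^ k * N) (2 ^ k) := by
  have hm : 1 ≤ 2 ^ k * N := Nat.mul_pos (by positivity) hN
  refine le_csInf ⟨_, ⟨?_, fun P hP => upper hm P hP⟩⟩ ?_
  · positivity
  rintro D ⟨hD, h⟩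
  obtain ⟨Q, hQ, hb, hz⟩ := exQ k _ rfl
  obtain ⟨z, hz1, hz2⟩ := hz 1 (by simp)
  have hQN := hQ.pow N
  have h1 := h _ hQN
  have h2 : supNorm (Q ^ N) ≤ 1 := by
    apply supNorm_le_one
    intro x hx
    rw [map_pow, abs_pow]
    exact pow_le_one₀ (abs_nonneg _) (hb x hx)
  have hm' : (1 : ℝ) ≤ (2 ^ k * N : ℕ) := by exact_mod_cast hm
  have h3 := aeval_le_lp (p := 2 * ((2 ^ k * N : ℕ) : ℝ) / (((2 ^ k * N : ℕ) : ℝ) + 1))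
    (by positivity) (Q ^ N) hQN z hz1
  rw [map_pow, hz2, one_mul, ← pow_mul, norm_pow, Complex.norm_ofNat] at h3
  rw [div_le_iff₀ (by positivity), mul_comm D]
  refine h3.trans ?_
  gcongr
  refine h1.trans ?_
  exact mul_le_of_le_one_right hD.le h2

theorem lim_aux (k : ℕ) : Tendsto (fun N : ℕ =>
    ((2 : ℝ) ^ ((2 ^ k - 1) * N) / (((2 ^ k * N : ℕ) : ℝ) + 1) ^ (2 ^ k)) ^ (((2 ^ k * N : ℕ) : ℝ)⁻¹))
    atTop (nhds ((2 : ℝ) ^ ((1 : ℝ) - 2 ^ (-(k : ℝ))))) := by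
  have hsub : Tendsto (fun N : ℕ => 2 ^ k * N) atTop atTop :=
    tendsto_id.const_mul_atTop' (by positivity)
  have h1 : Tendsto (fun N : ℕ => ((((2 ^ k * N : ℕ) : ℝ) + 1) ^ (((2 ^ k * N : ℕ) : ℝ)⁻¹)))
      atTop (nhds 1) := by
    have h := (tendsto_rpow_div_mul_add 1 1 (-1) (by norm_num)).comp
      (tendsto_atTop_add_const_right atTop (1 : ℝ)
        ((tendsto_natCast_atTop_atTop (R := ℝ)).comp hsub))
    refine h.congr fun N => ?_
    simp
  have h2 := (tendsto_const_nhds (x := (2 : ℝ) ^ ((1 : ℝ) - 2 ^ (-(k : ℝ))))).div (h1.pow (2 ^ k))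
    (by simp)
  rw [one_pow, div_one] at h2
  refine h2.congr' ?_
  filter_upwards [eventually_ge_atTop 1] with N hN
  have hN' : (N : ℝ) ≠ 0 := by positivity
  rw [Pi.div_apply, Real.div_rpow (by positivity) (by positivity)]
  congr 1
  · rw [← Real.rpow_natCast 2 ((2 ^ k - 1) * N), ← Real.rpow_mul (by norm_num)]
    congr 1
    have : 1 ≤ 2 ^ k := Nat.one_le_two_pow
    push_cast [Nat.cast_sub this]
    rw [Real.rpow_neg (by norm_num), Real.rpow_natCast]
    field_simp
  · rw [← Real.rpow_natCast, ← Real.rpow_natCast, ← Real.rpow_mul (by positivity),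
      ← Real.rpow_mul (by positivity), mul_comm (_⁻¹)]

/-- For fixed `k ∈ ℕ`, `limsup_{m→∞} D_{ℝ,m}(2^k)^{1/m} ≥ 2^{1 - 2^{-k}}`. -/
theorem real_BH_limsup_fixed_dim_pow_two (k : ℕ) :
    (2 : ℝ) ^ ((1 : ℝ) - 2 ^ (-(k : ℝ))) ≤
      limsup (fun m : ℕ => BHconstN m (2 ^ k) ^ ((m : ℝ)⁻¹)) atTop := by
  have hsub : Tendsto (fun N : ℕ => 2 ^ k * N) atTop atTop :=
    tendsto_id.const_mul_atTop' (by positivity)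
  refine le_of_forall_lt fun b hb => ?_
  obtain ⟨c, hbc, hc⟩ := exists_between hb
  refine hbc.trans_le ?_
  apply le_limsup_of_frequently_le
  · refine hsub.frequently (Eventually.frequently ?_)
    filter_upwards [(lim_aux k).eventually (lt_mem_nhds hc), eventually_ge_atTop 1] with N h1 hN
    refine h1.le.trans (Real.rpow_le_rpow (by positivity) (BH_lower k N hN) (by positivity))
  · refine ⟨18 ^ (2 ^ k), ?_⟩
    rw [eventually_map]
    filter_upwards [eventually_ge_atTop 1] with m hm
    exact BH_upper m _ hm
end

section
/- Let P(x) = ∑_{|α|=m} a_α x^α be an m-homogeneous polynomial in n variables with real coefficients, and let P_ℂ(z) = ∑_{|α|=m} a_α z^α be its complexification. Then sup{|P_ℂ(z)| : z ∈ 𝔻^n} ≤ 2^{m−1} · sup{|P(x)| : x ∈ [−1,1]^n}, where 𝔻 is the closed unit disk in ℂ. -/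
open MvPolynomial Filter

/-- The sup norm of a complex polynomial in `n` variables over the closed polydisk `𝔻^n`. -/
noncomputable def supNormC {n : ℕ} (P : MvPolynomial (Fin n) ℂ) : ℝ :=
  sSup {y : ℝ | ∃ z : Fin n → ℂ, (∀ i, ‖z i‖ ≤ 1) ∧ y = ‖eval z P‖}

/-- The `ℓ_p` norm of the coefficients of a complex polynomial. -/
noncomputable def lpNormC {n : ℕ} (p : ℝ) (P : MvPolynomial (Fin n) ℂ) : ℝ :=
  (∑ α ∈ P.support, ‖coeff α P‖ ^ p) ^ (1 / p)

lemma aux_eval_smul {n m : ℕ} (Q : MvPolynomial (Fin n) ℂ) (hQ : Q.IsHomogeneous m)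
    (c : ℂ) (z : Fin n → ℂ) : eval (fun i => c * z i) Q = c ^ m * eval z Q := by
  rw [eval_eq, eval_eq, Finset.mul_sum]
  refine Finset.sum_congr rfl fun d hd => ?_
  have h : ∑ i, d i = m := by
    have := hQ (mem_support_iff.mp hd)
    rw [← this, Finsupp.weight_apply, Finsupp.sum_fintype] <;> simp
  have h2 : ∏ i ∈ d.support, c ^ d i = c ^ m := by
    rw [Finset.prod_pow_eq_pow_sum, ← h]
    congr 1
    exact Finset.sum_subset (Finset.subset_univ _) (by simp)
  simp only [mul_pow, Finset.prod_mul_distrib]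
  rw [h2]; ring

noncomputable def auxQ {n : ℕ} (Q : MvPolynomial (Fin n) ℂ) (z w : Fin n → ℂ) : Polynomial ℂ :=
  eval₂ Polynomial.C (fun i => Polynomial.C (z i) + Polynomial.C (w i) * Polynomial.X) Q

lemma auxQ_eval {n : ℕ} (Q : MvPolynomial (Fin n) ℂ) (z w : Fin n → ℂ) (t : ℂ) :
    (auxQ Q z w).eval t = eval (fun i => z i + w i * t) Q := by
  simp [auxQ, eval₂_eq, eval_eq, Polynomial.eval_finset_sum, Polynomial.eval_prod]

lemma aux_prod_coeff {n : ℕ} (z w : Fin n → ℂ) (d : Fin n →₀ ℕ) (s : Finset (Fin n)) :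
    (∏ i ∈ s, (Polynomial.C (z i) + Polynomial.C (w i) * Polynomial.X) ^ d i).natDegree
      ≤ ∑ i ∈ s, d i ∧
    (∏ i ∈ s, (Polynomial.C (z i) + Polynomial.C (w i) * Polynomial.X) ^ d i).coeff
      (∑ i ∈ s, d i) = ∏ i ∈ s, w i ^ d i := by
  classical
  induction s using Finset.induction_on with
  | empty => simp
  | insert a s ha ih =>
    have h1 : (Polynomial.C (z a) + Polynomial.C (w a) * Polynomial.X).natDegree ≤ 1 := by
      compute_degree
    have h2 : ((Polynomial.C (z a) + Polynomial.C (w a) * Polynomial.X) ^ d a).natDegree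
        ≤ d a := by
      have := Polynomial.natDegree_pow_le_of_le (d a) h1
      simpa using this
    have h3 : ((Polynomial.C (z a) + Polynomial.C (w a) * Polynomial.X) ^ d a).coeff (d a)
        = w a ^ d a := by
      have := Polynomial.coeff_pow_of_natDegree_le (m := d a) h1
      simpa [Polynomial.coeff_C] using this
    rw [Finset.prod_insert ha, Finset.sum_insert ha, Finset.prod_insert ha]
    refine ⟨Polynomial.natDegree_mul_le_of_le h2 ih.1, ?_⟩
    rw [Polynomial.coeff_mul_add_eq_of_natDegree_le h2 ih.1, h3, ih.2]

lemma auxQ_coeff {n m : ℕ} (Q : MvPolynomial (Fin n) ℂ) (hQ : Q.IsHomogeneous m)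
    (z w : Fin n → ℂ) :
    (auxQ Q z w).natDegree ≤ m ∧ (auxQ Q z w).coeff m = eval w Q := by
  have h : ∀ d ∈ Q.support, ∑ i ∈ d.support, d i = m := by
    intro d hd
    have := hQ (mem_support_iff.mp hd)
    rw [← this, Finsupp.weight_apply, Finsupp.sum]; simp
  constructor
  · rw [auxQ, eval₂_eq]
    refine Polynomial.natDegree_sum_le_of_forall_le _ _ fun d hd => ?_
    refine (Polynomial.natDegree_C_mul_le _ _).trans ?_
    rw [← h d hd]
    exact (aux_prod_coeff z w d _).1
  · rw [auxQ, eval₂_eq, Polynomial.finset_sum_coeff, eval_eq]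
    refine Finset.sum_congr rfl fun d hd => ?_
    rw [Polynomial.coeff_C_mul]
    congr 1
    rw [← h d hd]
    exact (aux_prod_coeff z w d _).2

lemma aux_sum {m : ℕ} (hm : 0 < m) (q : Polynomial ℂ) (hq : q.natDegree ≤ m) (ω : ℂ)
    (hω : IsPrimitiveRoot ω m) :
    ∑ k ∈ Finset.range m, q.eval (ω ^ k) = m * (q.coeff 0 + q.coeff m) := by
  simp_rw [Polynomial.eval_eq_sum_range' (Nat.lt_succ_of_le hq)]
  rw [Finset.sum_comm, Finset.sum_range_succ]
  have h1 : ∀ j ∈ Finset.range m, j ≠ 0 →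
      ∑ k ∈ Finset.range m, q.coeff j * (ω ^ k) ^ j = 0 := by
    intro j hj hj0
    rw [← Finset.mul_sum]
    have hne : ω ^ j ≠ 1 := hω.pow_ne_one_of_pos_of_lt hj0 (Finset.mem_range.mp hj)
    have := mul_geom_sum (ω ^ j) m
    rw [← pow_mul, mul_comm j m, pow_mul, hω.pow_eq_one, one_pow, sub_self] at this
    have h2 := (mul_eq_zero.mp this).resolve_left (sub_ne_zero.mpr hne)
    have h3 : ∑ k ∈ Finset.range m, (ω ^ k) ^ j = 0 := by
      rw [← h2]
      exact Finset.sum_congr rfl fun k _ => by rw [← pow_mul, ← pow_mul, mul_comm]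
    rw [h3, mul_zero]
  rw [Finset.sum_eq_single_of_mem 0 (Finset.mem_range.mpr hm) h1]
  have h4 : ∀ k, (ω ^ k) ^ m = 1 := fun k => by
    rw [← pow_mul, mul_comm, pow_mul, hω.pow_eq_one, one_pow]
  simp [h4]; ring

lemma le_supNorm {n : ℕ} (P : MvPolynomial (Fin n) ℝ) (x : Fin n → ℝ) (hx : ∀ i, |x i| ≤ 1) :
    |eval x P| ≤ supNorm P := by
  refine le_csSup ?_ ⟨x, hx, rfl⟩
  have hc : IsCompact (Set.Icc (fun _ : Fin n => (-1 : ℝ)) (fun _ => 1)) := isCompact_Icc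
  have hf : Continuous fun x : Fin n → ℝ => |eval x P| :=
    (MvPolynomial.continuous_eval P).abs
  refine (hc.bddAbove_image hf.continuousOn).mono ?_
  rintro y ⟨x, hx, rfl⟩
  exact ⟨x, ⟨fun i => (abs_le.mp (hx i)).1, fun i => (abs_le.mp (hx i)).2⟩, rfl⟩

lemma eval_ofReal {n : ℕ} (P : MvPolynomial (Fin n) ℝ) (x : Fin n → ℝ) :
    eval (fun i => (x i : ℂ)) (map (algebraMap ℝ ℂ) P) = ((eval x P : ℝ) : ℂ) := by
  rw [eval_map, eval₂_eq, eval_eq]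
  simp

lemma eval_conj {n : ℕ} (P : MvPolynomial (Fin n) ℝ) (z : Fin n → ℂ) :
    eval (fun i => (starRingEnd ℂ) (z i)) (map (algebraMap ℝ ℂ) P) =
      (starRingEnd ℂ) (eval z (map (algebraMap ℝ ℂ) P)) := by
  simp [eval_map, eval₂_eq]

lemma aux_main {n m : ℕ} (hm : 0 < m) (P : MvPolynomial (Fin n) ℝ)
    (hP : P.IsHomogeneous m) (z : Fin n → ℂ) (hz : ∀ i, ‖z i‖ ≤ 1) :
    ‖eval z (map (algebraMap ℝ ℂ) P) +
      (starRingEnd ℂ) (eval z (map (algebraMap ℝ ℂ) P))‖ ≤ 2 ^ m * supNorm P := by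
  have hm0 : (m : ℂ) ≠ 0 := by exact_mod_cast hm.ne'
  set Q := map (algebraMap ℝ ℂ) P with hQdef
  have hQ : Q.IsHomogeneous m := hP.map _
  set ω : ℂ := Complex.exp (2 * Real.pi * Complex.I / m) with hωdef
  have hω : IsPrimitiveRoot ω m := Complex.isPrimitiveRoot_exp m hm.ne'
  set v : ℂ := Complex.exp (((-(Real.pi / m) : ℝ) : ℂ) * Complex.I) with hv
  have hvn : ‖v‖ = 1 := Complex.norm_exp_ofReal_mul_I _
  have hvm : v ^ m = -1 := by
    rw [hv, ← Complex.exp_nat_mul]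
    have : (m : ℂ) * (((-(Real.pi / m) : ℝ) : ℂ) * Complex.I) = -(Real.pi * Complex.I) := by
      push_cast; field_simp
    rw [this, Complex.exp_neg, Complex.exp_pi_mul_I]; norm_num
  have hvc : (starRingEnd ℂ) v = v * ω := by
    rw [hv, hωdef, ← Complex.exp_conj, ← Complex.exp_add]
    congr 1
    simp only [map_mul, Complex.conj_ofReal, Complex.conj_I]
    push_cast; field_simp; ring
  set q := auxQ Q z (fun i => (starRingEnd ℂ) (z i)) with hq
  have hqc := auxQ_coeff Q hQ z (fun i => (starRingEnd ℂ) (z i))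
  have hq0 : q.coeff 0 = eval z Q := by
    rw [Polynomial.coeff_zero_eq_eval_zero, hq, auxQ_eval]; simp
  have hqm : q.coeff m = (starRingEnd ℂ) (eval z Q) := by
    rw [hq, hqc.2, hQdef, eval_conj]
  have hs := aux_sum hm q hqc.1 ω hω
  rw [hq0, hqm] at hs
  have hk : ∀ k, ‖q.eval (ω ^ k)‖ ≤ 2 ^ m * supNorm P := by
    intro k
    have hx : ∀ i, |(v ^ k * z i).re| ≤ 1 := fun i =>
      (Complex.abs_re_le_norm _).trans (by rw [norm_mul, norm_pow, hvn]; simpa using hz i)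
    have h1 := le_supNorm P _ hx
    have h2 : (v ^ k) ^ m * q.eval (ω ^ k) =
        2 ^ m * ((eval (fun i => (v ^ k * z i).re) P : ℝ) : ℂ) := by
      rw [← eval_ofReal, hq, auxQ_eval, ← aux_eval_smul Q hQ, ← aux_eval_smul Q hQ]
      congr 2
      funext i
      have := Complex.add_conj (v ^ k * z i)
      rw [map_mul, map_pow, hvc] at this
      push_cast at this
      rw [← this]; ring
    have h3 := congrArg norm h2
    rw [norm_mul, norm_mul, norm_pow, norm_pow, hvn, norm_pow, Complex.norm_real] at h3
    simp only [one_pow, one_mul, Complex.norm_ofNat, Real.norm_eq_abs] at h3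
    rw [h3]
    gcongr
  have h5 : ‖(m : ℂ) * (eval z Q + (starRingEnd ℂ) (eval z Q))‖ ≤ m * (2 ^ m * supNorm P) := by
    rw [← hs]
    refine (norm_sum_le_of_le _ fun k _ => hk k).trans ?_
    simp
  rw [norm_mul, Complex.norm_natCast] at h5
  exact le_of_mul_le_mul_left h5 (by exact_mod_cast hm)

/-- If `P` is an `m`-homogeneous polynomial in `n` variables with real coefficients and
`P_ℂ` is its complexification, then
`sup{|P_ℂ(z)| : z ∈ 𝔻^n} ≤ 2^{m-1} · sup{|P(x)| : x ∈ [-1,1]^n}`. -/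
theorem supNormC_complexification_le (n m : ℕ) (P : MvPolynomial (Fin n) ℝ)
    (hP : P.IsHomogeneous m) :
    supNormC (map (algebraMap ℝ ℂ) P) ≤ 2 ^ (m - 1) * supNorm P := by
  refine csSup_le ⟨_, 0, by simp, rfl⟩ ?_
  rintro y ⟨z, hz, rfl⟩
  rcases Nat.eq_zero_or_pos m with rfl | hm
  · have h0 := (aux_eval_smul _ (hP.map (algebraMap ℝ ℂ)) 0 z)
    have h1 := eval_ofReal P (fun _ => 0)
    have h2 := le_supNorm P (fun _ => 0) (by simp)
    simp only [zero_mul, pow_zero, one_mul] at h0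
    simp only [Complex.ofReal_zero] at h1
    rw [← h0, h1, Complex.norm_real]
    simpa using h2
  · have hm0 : (m : ℂ) ≠ 0 := by exact_mod_cast hm.ne'
    set w := eval z (map (algebraMap ℝ ℂ) P) with hw
    set u : ℂ := Complex.exp (((-(Complex.arg w / m) : ℝ) : ℂ) * Complex.I) with hu
    have hun : ‖u‖ = 1 := Complex.norm_exp_ofReal_mul_I _
    have hum : u ^ m * w = (‖w‖ : ℂ) := by
      conv_lhs => rw [← Complex.norm_mul_exp_arg_mul_I w]
      rw [hu, ← Complex.exp_nat_mul, mul_left_comm, ← Complex.exp_add]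
      have : (m : ℂ) * (((-(Complex.arg w / m) : ℝ) : ℂ) * Complex.I) + Complex.arg w * Complex.I
          = 0 := by
        push_cast; field_simp; ring
      rw [this]; simp
    have h := aux_main hm P hP (fun i => u * z i) (fun i => by simpa [hun] using hz i)
    rw [aux_eval_smul _ (hP.map (algebraMap ℝ ℂ)), ← hw, hum, Complex.conj_ofReal,
      ← Complex.ofReal_add, Complex.norm_real, Real.norm_of_nonneg (by positivity)] at h
    obtain ⟨k, rfl⟩ : ∃ k, m = k + 1 := ⟨m - 1, by omega⟩
    rw [pow_succ] at h
    simp only [Nat.add_sub_cancel]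
    linarith
end
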